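/- arXiv:2603.03395 — 2 statements merged into one kernel-verified Lean document; each statement's English description precedes it below -/
import Mathlib

section
/- The set M_1 is dense in [0,1], has Lebesgue measure zero, and its Hausdorff–Besicovitch dimension satisfies dimH(M_1) ≥ log 2 / log 3. -/
open Filter

/-- The value of a ternary digit sequence: `val₃(a) = ∑_{k≥0} a k · 3^{-(k+1)}`. -/
noncomputable def val3 (a : ℕ → ℕ) : ℝ :=
  ∑' k : ℕ, (a k : ℝ) / 3 ^ (k + 1)

/-- For `i ∈ {0,1,2}`, `Mset i` is the set of values of ternary digit sequences for which
the asymptotic mean of digits and the frequency of the digit `i` both exist and are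
equal. -/
noncomputable def Mset (i : ℕ) : Set ℝ :=
  {x | ∃ a : ℕ → ℕ, (∀ n, a n < 3) ∧ x = val3 a ∧
    ∃ L : ℝ,
      Filter.Tendsto (fun n => (∑ k ∈ Finset.range n, (a k : ℝ)) / n)
        Filter.atTop (nhds L) ∧
      Filter.Tendsto
        (fun n => (((Finset.range n).filter (fun j => a j = i)).card : ℝ) / n)
        Filter.atTop (nhds L)}

/-! By the law of large numbers, the mean of any function of independent uniform digits in base `b`
converges almost surely to its expectation, and evaluation of digit expansions does not increase
outer measure. In base 3 the difference between a digit and the indicator of the digit `i` has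
nonzero expectation, whereas its mean tends to `0` on `Mset i`, which is therefore null.

On a sequence of zeros and ones the mean of the digits is the frequency of the digit `1`, so
`Mset 1` contains the values of all such sequences with digit mean `1/2`. Read in base 2 instead,
these sequences have values filling almost all of `[0,1]`. Passing from the ternary to the binary
value is Hölder of exponent `log 2 / log 3`, because a first difference at place `k` separates the
binary values by at most `2⁻ᵏ` and the ternary ones by at least a constant times `3⁻ᵏ`. Density
holds since changing all digits to `0` from some place on puts a sequence in `Mset 1`. -/

open MeasureTheory hiding cylinder
open ProbabilityTheory PiNat Set
open scoped Topology

/-- The mean of `f` over the first `n` terms of `a`. For `f` the numerical value of a digit this is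
the mean of the digits of `a`, for `f` an indicator it is the frequency of a digit. -/
noncomputable def runningMean {α : Type*} (f : α → ℝ) (a : ℕ → α) (n : ℕ) : ℝ :=
  (∑ i ∈ Finset.range n, f (a i)) / n

section RunningMean

variable {α : Type*} {f : α → ℝ}

theorem runningMean_ite (p : α → Prop) [DecidablePred p] (a : ℕ → α) :
    runningMean (fun x => if p x then 1 else 0) a =
      fun n => (((Finset.range n).filter fun j => p (a j)).card : ℝ) / n := by
  ext n
  simp only [runningMean, Finset.sum_boole]

theorem runningMean_sub (f g : α → ℝ) (a : ℕ → α) :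
    runningMean (fun x => f x - g x) a = fun n => runningMean f a n - runningMean g a n := by
  ext n
  simp only [runningMean, Finset.sum_sub_distrib, sub_div]

theorem tendsto_runningMean {a : ℕ → α} {l : ℝ}
    (h : Tendsto (fun n => f (a n)) atTop (𝓝 l)) : Tendsto (runningMean f a) atTop (𝓝 l) :=
  h.cesaro.congr fun _ => (div_eq_inv_mul _ _).symm

theorem ae_tendsto_runningMean [MeasurableSpace α] {ν : Measure α} [IsProbabilityMeasure ν]
    (hf : Integrable f ν) :
    ∀ᵐ a ∂Measure.infinitePi fun _ : ℕ => ν, Tendsto (runningMean f a) atTop (𝓝 (∫ x, f x ∂ν)) := by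
  let P : Measure (ℕ → α) := Measure.infinitePi fun _ => ν
  have coord (i : ℕ) : MeasurePreserving (Function.eval i) P ν :=
    measurePreserving_eval_infinitePi (fun _ => ν) i
  have f_aemeasurable (i : ℕ) : AEMeasurable f (P.map (Function.eval i)) := by
    rw [(coord i).map_eq]
    exact hf.aemeasurable
  have indep : Pairwise fun i j => IndepFun (fun a : ℕ → α => f (a i)) (fun a => f (a j)) P :=
    fun i j hij => ((iIndepFun_infinitePi fun _ => measurable_id).indepFun hij).comp₀
      (coord i).aemeasurable (coord j).aemeasurable (f_aemeasurable i) (f_aemeasurable j)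
  have ident (i : ℕ) : IdentDistrib (fun a : ℕ → α => f (a i)) (fun a => f (a 0)) P P :=
    ((coord i).hasLaw.identDistrib (coord 0).hasLaw).comp_of_aemeasurable (f_aemeasurable i)
  have mean_eq : ∫ a, f (a 0) ∂P = ∫ x, f x ∂ν := (coord 0).hasLaw.integral_comp hf.1
  exact mean_eq ▸
    strong_law_ae_real _ ((coord 0).integrable_comp_of_integrable hf) indep ident

end RunningMean

section UniformDigits

/-- The law of a sequence of independent digits, each uniformly distributed on `Fin b`. -/
noncomputable abbrev uniformDigits (b : ℕ) [NeZero b] : Measure (ℕ → Fin b) :=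
  Measure.infinitePi fun _ => uniformOn univ

variable {b : ℕ} [NeZero b]

theorem uniformDigits_cylinder (a : ℕ → Fin b) (n : ℕ) :
    uniformDigits b (cylinder a n) = ((b : ENNReal) ^ n)⁻¹ := by
  rw [cylinder_eq_pi, Measure.infinitePi_pi _ fun _ _ => measurableSet_singleton _]
  simp [uniformOn_univ, ENNReal.inv_pow]

theorem volume_image_ofDigits_cylinder_le (a : ℕ → Fin b) (n : ℕ) :
    volume (Real.ofDigits '' cylinder a n) ≤ ((b : ENNReal) ^ n)⁻¹ := by
  refine (Real.volume_le_diam _).trans (Metric.ediam_le ?_)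
  rintro _ ⟨x, hx, rfl⟩ _ ⟨y, hy, rfl⟩
  have agree : ∀ i < n, x i = y i := fun i hi => (hx i hi).trans (hy i hi).symm
  rw [edist_dist, Real.dist_eq]
  refine (ENNReal.ofReal_le_ofReal (Real.abs_ofDigits_sub_ofDigits_le agree)).trans_eq ?_
  have hb : (0 : ℝ) < b := by exact_mod_cast NeZero.pos b
  rw [ENNReal.ofReal_inv_of_pos (by positivity), ENNReal.ofReal_pow hb.le, ENNReal.ofReal_natCast]

theorem volume_image_ofDigits_le_of_forall_cylinder_subset {S : Set (ℕ → Fin b)} {n : ℕ}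
    (hS : ∀ a ∈ S, cylinder a n ⊆ S) :
    volume (Real.ofDigits '' S) ≤ uniformDigits b S := by
  let restrict (a : ℕ → Fin b) (i : Fin n) : Fin b := a i
  have fiber_eq (a : ℕ → Fin b) : restrict ⁻¹' {restrict a} = cylinder a n := by
    ext c
    simp [restrict, funext_iff, Fin.forall_iff]
  let W : Finset (Fin n → Fin b) := (toFinite (restrict '' S)).toFinset
  have preimage_restrict : restrict ⁻¹' W = S := by
    refine Subset.antisymm ?_ fun a ha => by simpa [W] using ⟨a, ha, rfl⟩
    intro c hc
    obtain ⟨a, ha, hac⟩ : ∃ a ∈ S, restrict a = restrict c := by simpa [W] using hc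
    exact hS a ha (fiber_eq a ▸ hac.symm)
  calc volume (Real.ofDigits '' S)
      = volume (⋃ w ∈ W, Real.ofDigits '' (restrict ⁻¹' {w})) := by
        rw [← image_iUnion₂]
        exact congrArg (volume <| Real.ofDigits '' ·)
          (preimage_restrict.symm.trans (biUnion_preimage_singleton restrict W).symm)
    _ ≤ ∑ w ∈ W, volume (Real.ofDigits '' (restrict ⁻¹' {w})) := measure_biUnion_finset_le _ _
    _ ≤ ∑ w ∈ W, uniformDigits b (restrict ⁻¹' {w}) := by
        refine Finset.sum_le_sum fun w hw => ?_
        obtain ⟨a, -, rfl⟩ : ∃ a ∈ S, restrict a = w := by simpa [W] using hw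
        rw [fiber_eq, uniformDigits_cylinder]
        exact volume_image_ofDigits_cylinder_le a n
    _ = uniformDigits b S := by
        rw [sum_measure_preimage_singleton W fun w _ => ?_, preimage_restrict]
        exact (measurable_pi_lambda _ fun i => measurable_pi_apply _) (measurableSet_singleton w)

theorem volume_image_ofDigits_le_of_isOpen {U : Set (ℕ → Fin b)} (hU : IsOpen U) :
    volume (Real.ofDigits '' U) ≤ uniformDigits b U := by
  let V (n : ℕ) : Set (ℕ → Fin b) := {a | cylinder a n ⊆ U}
  have V_subset (n : ℕ) : V n ⊆ U := fun a ha => ha (self_mem_cylinder a n)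
  have V_mono : Monotone V := fun m n hmn a ha => (cylinder_anti a hmn).trans ha
  have iUnion_V : ⋃ n, V n = U := by
    refine Subset.antisymm (iUnion_subset V_subset) fun a ha => ?_
    obtain ⟨_, ⟨x, n, rfl⟩, hax, hxU⟩ :=
      (isTopologicalBasis_cylinders fun _ => Fin b).exists_subset_of_mem_open ha hU
    exact mem_iUnion.2 ⟨n, (mem_cylinder_iff_eq.1 hax).trans_subset hxU⟩
  rw [← iUnion_V, image_iUnion,
    Monotone.measure_iUnion fun m n hmn => image_mono (V_mono hmn), iUnion_V]
  refine iSup_le fun n => ?_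
  refine (volume_image_ofDigits_le_of_forall_cylinder_subset (n := n) fun a ha c hc => ?_).trans
    (measure_mono (V_subset n))
  exact (mem_cylinder_iff_eq.1 hc).trans_subset ha

theorem volume_image_ofDigits_le (S : Set (ℕ → Fin b)) :
    volume (Real.ofDigits '' S) ≤ uniformDigits b S := by
  rw [S.measure_eq_iInf_isOpen (uniformDigits b)]
  exact le_iInf₂ fun U hSU => le_iInf fun hU =>
    (measure_mono (image_mono hSU)).trans (volume_image_ofDigits_le_of_isOpen hU)

theorem volume_image_ofDigits_ne_zero_of_ae {S : Set (ℕ → Fin b)} (hb : 1 < b)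
    (hS : ∀ᵐ a ∂uniformDigits b, a ∈ S) : volume (Real.ofDigits '' S) ≠ 0 := by
  intro image_null
  have compl_null : volume (Real.ofDigits '' Sᶜ) = 0 :=
    le_zero_iff.1 ((volume_image_ofDigits_le Sᶜ).trans_eq (mem_ae_iff.1 hS))
  have cover : Icc 0 1 ⊆ Real.ofDigits '' S ∪ Real.ofDigits '' Sᶜ := by
    rw [← image_union, union_compl_self]
    exact Real.ofDigits_SurjOn hb
  simpa using measure_mono_null cover (measure_union_null image_null compl_null)

theorem ae_uniformDigits_tendsto_runningMean (f : Fin b → ℝ) :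
    ∀ᵐ a ∂uniformDigits b, Tendsto (runningMean f a) atTop (𝓝 ((∑ d, f d) / b)) := by
  have integral_eq : ∫ d, f d ∂uniformOn univ = (∑ d, f d) / b := by
    rw [integral_fintype .of_finite, Finset.sum_div]
    simp [measureReal_def, uniformOn_univ, div_eq_inv_mul]
  exact integral_eq ▸ ae_tendsto_runningMean .of_finite

end UniformDigits

section Density

theorem dense_setOf_eventually_eq {X : ℕ → Type*} [∀ n, TopologicalSpace (X n)] (c : ∀ n, X n) :
    Dense {a : ∀ n, X n | ∀ᶠ n in atTop, a n = c n} := by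
  intro a
  refine mem_closure_of_tendsto (b := atTop) (f := fun m n => if n < m then a n else c n)
    (tendsto_pi_nhds.2 fun n => ?_) (Eventually.of_forall fun m => ?_)
  · exact tendsto_const_nhds.congr' ((eventually_gt_atTop n).mono fun m hm => (if_pos hm).symm)
  · exact (eventually_ge_atTop m).mono fun n hn => if_neg hn.not_gt

theorem Icc_subset_closure_image_ofDigits_eventually_eq {b : ℕ} (hb : 1 < b) (c : ℕ → Fin b) :
    Icc 0 1 ⊆ closure (Real.ofDigits '' {a | ∀ᶠ n in atTop, a n = c n}) := by
  refine Subset.trans ?_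
    (Real.continuous_ofDigits.range_subset_closure_image_dense (dense_setOf_eventually_eq c))
  rw [← image_univ]
  exact Real.ofDigits_SurjOn hb

end Density

section MissingDigits

variable {b c : ℕ}

theorem ofDigits_le_of_forall_le {m : ℕ} (hb : 1 < b) {a : ℕ → Fin b} (ha : ∀ n, (a n : ℕ) ≤ m) :
    Real.ofDigits a ≤ m / (b - 1) := by
  have hb' : (0 : ℝ) < b - 1 := by rw [sub_pos]; exact_mod_cast hb
  let last : Fin b := ⟨b - 1, Nat.sub_one_lt_of_lt hb⟩
  rw [le_div_iff₀ hb']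
  calc Real.ofDigits a * (b - 1)
      ≤ m * Real.ofDigits fun _ => last := by
        rw [Real.ofDigits, Real.ofDigits, ← tsum_mul_right, ← tsum_mul_left]
        refine (Real.summable_ofDigitsTerm.mul_right _).tsum_mono
          (Real.summable_ofDigitsTerm.mul_left _) fun n => ?_
        simp only [Real.ofDigitsTerm, last, Nat.cast_pred (zero_lt_one.trans hb)]
        rw [mul_right_comm, mul_assoc]
        gcongr
        exact ha n
    _ = m := by rw [Real.ofDigits_const_last_eq_one' hb, mul_one]

theorem le_ofDigits_sub_ofDigits {m k : ℕ} (hb : 1 < b) {x y : ℕ → Fin b}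
    (hxy : ∀ i < k, x i = y i) (hk : y k < x k) (hy : ∀ n, (y n : ℕ) ≤ m) :
    (1 - m / (b - 1)) * ((b : ℝ) ^ (k + 1))⁻¹ ≤ Real.ofDigits x - Real.ofDigits y := by
  have initial_eq : ∑ i ∈ Finset.range k, Real.ofDigitsTerm x i =
      ∑ i ∈ Finset.range k, Real.ofDigitsTerm y i :=
    Finset.sum_congr rfl fun i hi => by simp only [Real.ofDigitsTerm, hxy i (Finset.mem_range.1 hi)]
  have digit_gap : ((y k : ℕ) : ℝ) + 1 ≤ (x k : ℕ) := by exact_mod_cast hk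
  have x_tail := Real.ofDigits_nonneg fun i => x (i + (k + 1))
  have y_tail := ofDigits_le_of_forall_le hb fun i => hy (i + (k + 1))
  rw [Real.ofDigits_eq_sum_add_ofDigits x (k + 1), Real.ofDigits_eq_sum_add_ofDigits y (k + 1),
    Finset.sum_range_succ, Finset.sum_range_succ, initial_eq]
  simp only [Real.ofDigitsTerm]
  calc (1 - m / (b - 1)) * ((b : ℝ) ^ (k + 1))⁻¹
      ≤ ((x k - y k : ℝ) + (Real.ofDigits (fun i => x (i + (k + 1))) -
          Real.ofDigits fun i => y (i + (k + 1)))) * ((b : ℝ) ^ (k + 1))⁻¹ := by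
        gcongr
        linarith
    _ = _ := by ring

theorem le_abs_ofDigits_castLE_sub (hbc : b < c) {x y : ℕ → Fin b} (hne : x ≠ y) :
    (c - b) / (c - 1) * ((c : ℝ) ^ (firstDiff x y + 1))⁻¹ ≤
      |Real.ofDigits (Fin.castLE hbc.le ∘ x) - Real.ofDigits (Fin.castLE hbc.le ∘ y)| := by
  wlog hlt : y (firstDiff x y) < x (firstDiff x y) generalizing x y
  · rw [abs_sub_comm, firstDiff_comm]
    refine this hne.symm ?_
    rw [firstDiff_comm]
    exact (apply_firstDiff_ne hne).lt_or_gt.resolve_right hlt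
  have hb : 0 < b := Fin.pos (x 0)
  have hc : 1 < c := by lia
  have gap := le_ofDigits_sub_ofDigits (m := b - 1) (x := Fin.castLE hbc.le ∘ x)
    (y := Fin.castLE hbc.le ∘ y) hc
    (fun i hi => congrArg _ (apply_eq_of_lt_firstDiff hi)) hlt fun n => Nat.le_pred_of_lt (y n).2
  have hc' : (c : ℝ) - 1 ≠ 0 := (sub_pos.2 (by exact_mod_cast hc)).ne'
  have coeff_eq : ((c : ℝ) - b) / (c - 1) = 1 - ((b - 1 : ℕ) : ℝ) / (c - 1) := by
    rw [Nat.cast_pred hb]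
    field
  exact coeff_eq ▸ gap.trans (le_abs_self _)

theorem abs_ofDigits_sub_le_rpow_logb (hbc : b < c) (x y : ℕ → Fin b) :
    |Real.ofDigits x - Real.ofDigits y| ≤
      (c * (c - 1) / (c - b) *
        |Real.ofDigits (Fin.castLE hbc.le ∘ x) - Real.ofDigits (Fin.castLE hbc.le ∘ y)|) ^
          Real.logb c b := by
  have hb : 0 < b := Fin.pos (x 0)
  have hb₁ : (1 : ℝ) ≤ b := by exact_mod_cast hb
  have hbc' : (b : ℝ) < c := by exact_mod_cast hbc
  have coeff_nonneg : (0 : ℝ) ≤ c * (c - 1) / (c - b) :=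
    div_nonneg (mul_nonneg (by positivity) (by linarith)) (by linarith)
  obtain rfl | hne := eq_or_ne x y
  · simp only [sub_self, abs_zero, mul_zero]
    positivity
  have c_rpow : (c : ℝ) ^ Real.logb c b = b :=
    Real.rpow_logb (by linarith) (by linarith) (by linarith)
  calc |Real.ofDigits x - Real.ofDigits y|
      ≤ ((b : ℝ) ^ firstDiff x y)⁻¹ :=
        Real.abs_ofDigits_sub_ofDigits_le fun i hi => apply_eq_of_lt_firstDiff hi
    _ = (((c : ℝ) ^ firstDiff x y)⁻¹) ^ Real.logb c b := by
        rw [Real.inv_rpow (by positivity), ← Real.rpow_pow_comm (by positivity), c_rpow]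
    _ ≤ _ := by
        refine Real.rpow_le_rpow (by positivity) ?_ (Real.logb_nonneg (by linarith) hb₁)
        refine le_trans (le_of_eq ?_)
          (mul_le_mul_of_nonneg_left (le_abs_ofDigits_castLE_sub hbc hne) coeff_nonneg)
        have : (c : ℝ) ≠ 0 := by linarith
        have : (c : ℝ) - 1 ≠ 0 := by linarith
        have : (c : ℝ) - b ≠ 0 := by linarith
        field

theorem dimH_range_le_div_of_edist_le {ι X Y : Type*} [EMetricSpace X] [EMetricSpace Y]
    {u : ι → Y} {v : ι → X} {C r : NNReal} (hr : 0 < r)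
    (huv : ∀ i j, edist (u i) (u j) ≤ C * edist (v i) (v j) ^ (r : ℝ)) :
    dimH (range u) ≤ dimH (range v) / r := by
  have factors : u.FactorsThrough v := fun i j hij =>
    edist_le_zero.1 ((huv i j).trans_eq (by simp [hij, hr]))
  obtain hι | ⟨⟨i⟩⟩ := isEmpty_or_nonempty ι
  · simp [range_eq_empty]
  have extend_comp : Function.extend v u (fun _ => u i) ∘ v = u := factors.extend_comp _
  have holder : HolderOnWith C r (Function.extend v u fun _ => u i) (range v) := by
    rintro _ ⟨i, rfl⟩ _ ⟨j, rfl⟩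
    simpa only [factors.extend_apply] using huv i j
  simpa only [← range_comp, extend_comp] using holder.dimH_image_le hr

theorem ofReal_le_dimH_range_of_abs_sub_le {ι : Type*} {u v : ι → ℝ} {C r : ℝ} (hC : 0 ≤ C)
    (hr : 0 < r) (huv : ∀ i j, |u i - u j| ≤ C * |v i - v j| ^ r) (hu : volume (range u) ≠ 0) :
    ENNReal.ofReal r ≤ dimH (range v) := by
  lift C to NNReal using hC
  lift r to NNReal using hr.le
  have hr' : 0 < r := hr
  have one_le : 1 ≤ dimH (range u) := by
    refine le_dimH_of_hausdorffMeasure_ne_zero (d := 1) ?_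
    rwa [NNReal.coe_one, hausdorffMeasure_real]
  have le_div : dimH (range u) ≤ dimH (range v) / r :=
    dimH_range_le_div_of_edist_le hr' fun i j => by
      rw [edist_dist, edist_dist, Real.dist_eq, Real.dist_eq,
        ENNReal.ofReal_rpow_of_nonneg (abs_nonneg _) r.coe_nonneg, ← ENNReal.ofReal_coe_nnreal,
        ← ENNReal.ofReal_mul C.coe_nonneg]
      exact ENNReal.ofReal_le_ofReal (huv i j)
  have one_le_div := one_le.trans le_div
  rwa [ENNReal.le_div_iff_mul_le (.inl (by simpa using hr'.ne')) (.inl ENNReal.coe_ne_top),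
    one_mul, ← ENNReal.ofReal_coe_nnreal] at one_le_div

theorem ofReal_logb_le_dimH_image_ofDigits_castLE (hb : 1 < b) (hbc : b < c)
    {S : Set (ℕ → Fin b)} (hS : volume (Real.ofDigits '' S) ≠ 0) :
    ENNReal.ofReal (Real.logb c b) ≤
      dimH ((fun a => Real.ofDigits (Fin.castLE hbc.le ∘ a)) '' S) := by
  have hb' : (1 : ℝ) < b := by exact_mod_cast hb
  have hbc' : (b : ℝ) < c := by exact_mod_cast hbc
  have coeff_nonneg : (0 : ℝ) ≤ c * (c - 1) / (c - b) :=
    div_nonneg (mul_nonneg (by positivity) (by linarith)) (by linarith)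
  rw [image_eq_range] at hS ⊢
  refine ofReal_le_dimH_range_of_abs_sub_le (Real.rpow_nonneg coeff_nonneg (Real.logb c b))
    (Real.logb_pos (hb'.trans hbc') hb') (fun x y => ?_) hS
  rw [← Real.mul_rpow coeff_nonneg (abs_nonneg _)]
  exact abs_ofDigits_sub_le_rpow_logb hbc x y

end MissingDigits

section Mset

theorem val3_val (a : ℕ → Fin 3) : val3 (fun n => a n) = Real.ofDigits a := by
  simp [val3, Real.ofDigits, Real.ofDigitsTerm, div_eq_mul_inv]

theorem mem_Mset_iff {i : ℕ} {x : ℝ} :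
    x ∈ Mset i ↔ ∃ a : ℕ → Fin 3, Real.ofDigits a = x ∧ ∃ L,
      Tendsto (runningMean (fun d : Fin 3 => (d : ℝ)) a) atTop (𝓝 L) ∧
      Tendsto (runningMean (fun d : Fin 3 => if (d : ℕ) = i then (1 : ℝ) else 0) a)
        atTop (𝓝 L) := by
  simp only [runningMean_ite, ← val3_val]
  constructor
  · rintro ⟨a, ha, rfl, h⟩
    exact ⟨fun n => ⟨a n, ha n⟩, rfl, h⟩
  · rintro ⟨a, rfl, h⟩
    exact ⟨fun n => a n, fun n => (a n).2, rfl, h⟩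

theorem volume_Mset (i : ℕ) : volume (Mset i) = 0 := by
  let f (d : Fin 3) : ℝ := d - if (d : ℕ) = i then 1 else 0
  have mean_ne_zero : (∑ d, f d) / (3 : ℕ) ≠ 0 := by
    simp only [f, Fin.sum_univ_three]
    split_ifs <;> first | lia | norm_num
  refine measure_mono_null ?_ <| le_zero_iff.1 <| (volume_image_ofDigits_le _).trans_eq <|
    ae_iff.1 <| ae_uniformDigits_tendsto_runningMean f
  intro x hx
  obtain ⟨a, rfl, L, digit_mean, frequency⟩ := mem_Mset_iff.1 hx
  refine mem_image_of_mem _ fun h => mean_ne_zero (tendsto_nhds_unique h ?_)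
  simpa only [f, runningMean_sub, sub_self] using digit_mean.sub frequency

theorem Icc_subset_closure_Mset {i : ℕ} (hi : i ≠ 0) : Icc 0 1 ⊆ closure (Mset i) := by
  refine (Icc_subset_closure_image_ofDigits_eventually_eq (b := 3) (by norm_num) 0).trans
    (closure_mono ?_)
  rintro _ ⟨a, ha, rfl⟩
  refine mem_Mset_iff.2 ⟨a, rfl, 0, tendsto_runningMean ?_, tendsto_runningMean ?_⟩ <;>
    refine tendsto_const_nhds.congr' (ha.mono fun n hn => ?_) <;>
    simp [hn, hi.symm]

theorem ofDigits_castLE_mem_Mset_one {a : ℕ → Fin 2} {L : ℝ}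
    (ha : Tendsto (runningMean (fun d : Fin 2 => (d : ℝ)) a) atTop (𝓝 L)) :
    Real.ofDigits (Fin.castLE (Nat.le_succ 2) ∘ a) ∈ Mset 1 := by
  have indicator_one : (fun d : Fin 2 => if (d : ℕ) = 1 then (1 : ℝ) else 0) = fun d => ↑↑d := by
    ext d
    fin_cases d <;> simp
  refine mem_Mset_iff.2 ⟨_, rfl, L, ha, ?_⟩
  change Tendsto (runningMean (fun d : Fin 2 => if (d : ℕ) = 1 then (1 : ℝ) else 0) a) atTop (𝓝 L)
  rwa [indicator_one]

theorem ofReal_logb_le_dimH_Mset_one : ENNReal.ofReal (Real.logb 3 2) ≤ dimH (Mset 1) := by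
  have image_not_null := volume_image_ofDigits_ne_zero_of_ae one_lt_two
    (ae_uniformDigits_tendsto_runningMean fun d : Fin 2 => (d : ℝ))
  refine (ofReal_logb_le_dimH_image_ofDigits_castLE one_lt_two (Nat.lt_succ_self 2)
    image_not_null).trans (dimH_mono ?_)
  rintro _ ⟨a, ha, rfl⟩
  exact ofDigits_castLE_mem_Mset_one ha

end Mset

/-- The set `M₁` is dense in `[0,1]`, has Lebesgue measure zero, and its
Hausdorff–Besicovitch dimension is at least `log 2 / log 3`. -/
theorem Mset_one_dense_measureZero_dimH :
    Set.Icc (0 : ℝ) 1 ⊆ closure (Mset 1) ∧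
    MeasureTheory.volume (Mset 1) = 0 ∧
    ENNReal.ofReal (Real.log 2 / Real.log 3) ≤ dimH (Mset 1) :=
  ⟨Icc_subset_closure_Mset one_ne_zero, volume_Mset 1, ofReal_logb_le_dimH_Mset_one⟩
end

section
/- The set M_2 is dense in the interval [0,1] and is anomalously fractal: its Hausdorff–Besicovitch dimension equals 0, i.e. dimH(M_2) = 0. -/
open Filter

/-!
If `a` has asymptotic mean `L` and the digit `i ≥ 2` has frequency `L` in `a`, then `i * L ≤ L`,
since the digits `i` alone contribute `i * L` to the mean; so `L = 0`. Eventually zero sequences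
have mean zero, which gives density. For the dimension, for each `c > 1` there is `ε > 0` such that
the number of words of length `n` with digit sum at most `ε * n` is at most `c ^ n` (a Chernoff
bound). With `c = b ^ d` the corresponding intervals of length `b ^ (-n)` have total
`d`-dimensional size at most `1`; every sequence of mean zero is covered from some `n` on, so the
dimension is at most `d`, for every `d > 0`.
-/

open scoped ENNReal Finset NNReal Topology

/-- The mean of the first `n` terms of `a`; its limit is the asymptotic mean `r(a)`. At `n = 0` the
value is `0`. -/
noncomputable def digitMean (a : ℕ → ℕ) (n : ℕ) : ℝ :=
  (∑ k ∈ Finset.range n, (a k : ℝ)) / n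

/-- The proportion of the first `n` terms of `a` that equal `i`; its limit is the frequency
`ν_i(a)`. At `n = 0` the value is `0`. -/
noncomputable def digitFreq (a : ℕ → ℕ) (i n : ℕ) : ℝ :=
  (#{j ∈ Finset.range n | a j = i} : ℝ) / n

/-- The base-`b` digit sequences whose asymptotic mean and frequency of the digit `i` both exist and
are equal; for `b = 3` their values form `M_i`. -/
def meanEqFreqDigits (b i : ℕ) : Set (ℕ → Fin b) :=
  {a | ∃ L, Tendsto (digitMean fun k => a k) atTop (𝓝 L) ∧
    Tendsto (digitFreq (fun k => a k) i) atTop (𝓝 L)}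

/-- The base-`b` digit sequences whose asymptotic mean is `0`, to which `meanEqFreqDigits b i`
reduces when `2 ≤ i`. -/
def zeroMeanDigits (b : ℕ) : Set (ℕ → Fin b) :=
  {a | Tendsto (digitMean fun k => a k) atTop (𝓝 0)}

theorem digitMean_nonneg (a : ℕ → ℕ) (n : ℕ) : 0 ≤ digitMean a n := by
  unfold digitMean
  positivity

theorem digitFreq_nonneg (a : ℕ → ℕ) (i n : ℕ) : 0 ≤ digitFreq a i n := by
  unfold digitFreq
  positivity

theorem mul_digitFreq_le_digitMean (a : ℕ → ℕ) (i n : ℕ) :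
    i * digitFreq a i n ≤ digitMean a n := by
  have hsum : i * #{j ∈ Finset.range n | a j = i} ≤ ∑ k ∈ Finset.range n, a k :=
    calc i * #{j ∈ Finset.range n | a j = i}
        = ∑ k ∈ Finset.range n with a k = i, a k := by
          rw [Finset.sum_congr rfl fun k hk => (Finset.mem_filter.1 hk).2, Finset.sum_const,
            smul_eq_mul, mul_comm]
      _ ≤ ∑ k ∈ Finset.range n, a k :=
          Finset.sum_le_sum_of_subset (Finset.filter_subset _ _)
  unfold digitFreq digitMean
  rw [← mul_div_assoc]
  gcongr
  exact_mod_cast hsum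

theorem exists_tendsto_digitMean_digitFreq_iff {a : ℕ → ℕ} {i : ℕ} (hi : 2 ≤ i) :
    (∃ L, Tendsto (digitMean a) atTop (𝓝 L) ∧ Tendsto (digitFreq a i) atTop (𝓝 L)) ↔
      Tendsto (digitMean a) atTop (𝓝 0) := by
  have hi' : (2 : ℝ) ≤ i := by exact_mod_cast hi
  constructor
  · rintro ⟨L, hmean, hfreq⟩
    have hL_nonneg : 0 ≤ L := ge_of_tendsto' hmean (digitMean_nonneg a)
    have hL_le : i * L ≤ L :=
      le_of_tendsto_of_tendsto' (hfreq.const_mul _) hmean (mul_digitFreq_le_digitMean a i)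
    obtain rfl : L = 0 := by nlinarith
    exact hmean
  · refine fun hmean => ⟨0, hmean, squeeze_zero (digitFreq_nonneg a i) (fun n => ?_) hmean⟩
    calc digitFreq a i n ≤ i * digitFreq a i n :=
          le_mul_of_one_le_left (digitFreq_nonneg a i n) (by linarith)
      _ ≤ digitMean a n := mul_digitFreq_le_digitMean a i n

theorem meanEqFreqDigits_eq_zeroMeanDigits (b : ℕ) {i : ℕ} (hi : 2 ≤ i) :
    meanEqFreqDigits b i = zeroMeanDigits b :=
  Set.ext fun _ => exists_tendsto_digitMean_digitFreq_iff hi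

theorem val3_eq_ofDigits (a : ℕ → Fin 3) : val3 (fun k => a k) = Real.ofDigits a := by
  simp only [val3, Real.ofDigits, Real.ofDigitsTerm, div_eq_mul_inv, Nat.cast_ofNat]

theorem Mset_eq_image_ofDigits (i : ℕ) : Mset i = Real.ofDigits '' meanEqFreqDigits 3 i := by
  ext x
  constructor
  · rintro ⟨a, ha, rfl, hlim⟩
    exact ⟨fun k => ⟨a k, ha k⟩, hlim, (val3_eq_ofDigits _).symm⟩
  · rintro ⟨a, hlim, rfl⟩
    exact ⟨fun k => a k, fun k => (a k).is_lt, (val3_eq_ofDigits a).symm, hlim⟩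

theorem mem_zeroMeanDigits_of_eventually_eq_zero {b : ℕ} [NeZero b] {a : ℕ → Fin b}
    (ha : ∀ᶠ k in atTop, a k = 0) : a ∈ zeroMeanDigits b := by
  have hlim : Tendsto (fun k => ((a k : ℕ) : ℝ)) atTop (𝓝 0) :=
    tendsto_const_nhds.congr' (ha.mono fun k hk => by simp [hk])
  exact hlim.cesaro.congr fun n => (div_eq_inv_mul _ _).symm

theorem dense_zeroMeanDigits (b : ℕ) : Dense (zeroMeanDigits b) := by
  intro a
  have : NeZero b := ⟨(Fin.pos (a 0)).ne'⟩
  let trunc (n k : ℕ) : Fin b := if k < n then a k else 0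
  have htrunc : Tendsto trunc atTop (𝓝 a) := tendsto_pi_nhds.2 fun k =>
    tendsto_const_nhds.congr' <| (eventually_gt_atTop k).mono fun n hn => (if_pos hn).symm
  refine mem_closure_of_tendsto htrunc (Eventually.of_forall fun n => ?_)
  exact mem_zeroMeanDigits_of_eventually_eq_zero <|
    (eventually_ge_atTop n).mono fun k hk => if_neg hk.not_gt

theorem Icc_subset_closure_image_ofDigits {b : ℕ} (hb : 1 < b) {S : Set (ℕ → Fin b)}
    (hS : Dense S) : Set.Icc (0 : ℝ) 1 ⊆ closure (Real.ofDigits '' S) :=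
  calc Set.Icc (0 : ℝ) 1 ⊆ Real.ofDigits '' (Set.univ : Set (ℕ → Fin b)) :=
        Real.ofDigits_SurjOn hb
    _ = Real.ofDigits '' closure S := by rw [hS.closure_eq]
    _ ⊆ closure (Real.ofDigits '' S) :=
        image_closure_subset_closure_image Real.continuous_ofDigits

/-- The words of length `n` over the base-`b` digits whose digit mean is at most `ε`; for small `ε`
they are the prefixes through which sequences of zero asymptotic mean are covered. -/
noncomputable def lightWords (b : ℕ) (ε : ℝ) (n : ℕ) : Finset (Fin n → Fin b) :=
  {w | ∑ i, ((w i : ℕ) : ℝ) ≤ ε * n}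

theorem eventually_prefix_mem_lightWords {b : ℕ} {a : ℕ → Fin b} (ha : a ∈ zeroMeanDigits b)
    {ε : ℝ} (hε : 0 < ε) : ∀ᶠ n in atTop, (fun i : Fin n => a i) ∈ lightWords b ε n := by
  filter_upwards [Tendsto.eventually_le_const hε ha, eventually_gt_atTop 0] with n hmean hn
  rw [digitMean, div_le_iff₀ (Nat.cast_pos.2 hn), Finset.sum_range] at hmean
  simpa only [lightWords, Finset.mem_filter_univ] using hmean

-- Chernoff's argument: each counted word has weight `∏ i, z ^ f (w i) ≥ z ^ t`.
theorem card_sum_le_mul_rpow_le {ι κ : Type*} [Fintype ι] [DecidableEq ι] [Fintype κ]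
    (f : κ → ℝ) (t : ℝ) {z : ℝ} (hz₀ : 0 < z) (hz₁ : z ≤ 1) :
    #{w : ι → κ | ∑ i, f (w i) ≤ t} * z ^ t ≤ (∑ j, z ^ f j) ^ Fintype.card ι := by
  calc #{w : ι → κ | ∑ i, f (w i) ≤ t} * z ^ t
      ≤ ∑ w : ι → κ with ∑ i, f (w i) ≤ t, ∏ i, z ^ f (w i) := by
        rw [← nsmul_eq_mul]
        refine Finset.card_nsmul_le_sum _ _ _ fun w hw => ?_
        rw [← Real.rpow_sum_of_pos hz₀]
        exact Real.rpow_le_rpow_of_exponent_ge hz₀ hz₁ (Finset.mem_filter.1 hw).2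
    _ ≤ ∑ w : ι → κ, ∏ i, z ^ f (w i) :=
        Finset.sum_le_sum_of_subset_of_nonneg (Finset.filter_subset _ _) fun _ _ _ => by positivity
    _ = (∑ j, z ^ f j) ^ Fintype.card ι := by
        rw [← Fintype.piFinset_univ, ← Finset.prod_univ_sum (fun _ => Finset.univ)
          (fun _ j => z ^ f j), Finset.prod_const, Finset.card_univ]

theorem card_lightWords_mul_rpow_le (b : ℕ) (ε : ℝ) (n : ℕ) {z : ℝ} (hz₀ : 0 < z) (hz₁ : z < 1) :
    #(lightWords b ε n) * (z ^ ε) ^ n ≤ ((1 - z)⁻¹) ^ n := by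
  have hgeom : ∑ j : Fin b, z ^ ((j : ℕ) : ℝ) ≤ (1 - z)⁻¹ := by
    simp only [Real.rpow_natCast, Fin.sum_univ_eq_sum_range (z ^ ·)]
    rw [← tsum_geometric_of_lt_one hz₀.le hz₁]
    exact (summable_geometric_of_lt_one hz₀.le hz₁).sum_le_tsum _ fun _ _ => by positivity
  calc #(lightWords b ε n) * (z ^ ε) ^ n
      = #(lightWords b ε n) * z ^ (ε * n) := by rw [Real.rpow_mul_natCast hz₀.le]
    _ ≤ (∑ j : Fin b, z ^ ((j : ℕ) : ℝ)) ^ Fintype.card (Fin n) :=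
        card_sum_le_mul_rpow_le (fun j : Fin b => ((j : ℕ) : ℝ)) (ε * n) hz₀ hz₁.le
    _ ≤ ((1 - z)⁻¹) ^ n := by
        rw [Fintype.card_fin]
        exact pow_le_pow_left₀ (Finset.sum_nonneg fun _ _ => by positivity) hgeom n

theorem exists_pos_forall_card_lightWords_le_pow (b : ℕ) {c : ℝ} (hc : 1 < c) :
    ∃ ε > 0, ∀ n, (#(lightWords b ε n) : ℝ) ≤ c ^ n := by
  -- `z` and `ε` are chosen so that `1 - z = (c + 1) / (2 * c)` and `z ^ ε = ((c + 1) / 2)⁻¹`.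
  set z : ℝ := (c - 1) / (2 * c) with hz
  set q : ℝ := (c + 1) / 2 with hq
  have hz₀ : 0 < z := div_pos (by linarith) (by linarith)
  have hz₁ : z < 1 := (div_lt_one (by linarith)).2 (by linarith)
  have hq₁ : 1 < q := by linarith
  have hq_inv : z ^ (-Real.logb z q) = q⁻¹ := by
    rw [Real.rpow_neg hz₀.le, Real.rpow_logb hz₀ hz₁.ne (by linarith)]
  have hqz : (1 - z)⁻¹ = c * q⁻¹ := by
    rw [← div_eq_mul_inv, ← inv_div, hz, hq]
    congr 1
    field_simp
    ring
  refine ⟨-Real.logb z q, neg_pos.2 (Real.logb_neg_of_base_lt_one hz₀ hz₁ hq₁), fun n => ?_⟩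
  have hcount := card_lightWords_mul_rpow_le b (-Real.logb z q) n hz₀ hz₁
  rw [hq_inv, hqz, mul_pow] at hcount
  exact le_of_mul_le_mul_right hcount (by positivity)

theorem dimH_le_of_frequently_card_mul_rpow_le {X β : Type*} [EMetricSpace X] {l : Filter β}
    {ι : β → Type*} [∀ n, Fintype (ι n)] {s : Set X} {r : β → ℝ≥0∞} (hr : Tendsto r l (𝓝 0))
    {t : ∀ n, ι n → Set X} (ht : ∀ᶠ n in l, ∀ i, Metric.ediam (t n i) ≤ r n)
    (hst : ∀ᶠ n in l, s ⊆ ⋃ i, t n i) {d : ℝ≥0} {C : ℝ≥0∞} (hC : C ≠ ∞)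
    (hcard : ∃ᶠ n in l, Fintype.card (ι n) * r n ^ (d : ℝ) ≤ C) : dimH s ≤ d := by
  borelize X
  refine dimH_le_of_hausdorffMeasure_ne_top (ne_top_of_le_ne_top hC ?_)
  refine (MeasureTheory.Measure.hausdorffMeasure_le_liminf_sum d s r hr t ht hst).trans ?_
  refine liminf_le_of_frequently_le' ((hcard.and_eventually ht).mono fun n hn => ?_)
  calc ∑ i, Metric.ediam (t n i) ^ (d : ℝ) ≤ ∑ _i : ι n, r n ^ (d : ℝ) :=
        Finset.sum_le_sum fun i _ => ENNReal.rpow_le_rpow (hn.2 i) d.coe_nonneg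
    _ = Fintype.card (ι n) * r n ^ (d : ℝ) := by
        rw [Finset.sum_const, Finset.card_univ, nsmul_eq_mul]
    _ ≤ C := hn.1

theorem ediam_image_ofDigits_prefix_le {b n : ℕ} (w : Fin n → Fin b) :
    Metric.ediam (Real.ofDigits '' {a : ℕ → Fin b | (fun i : Fin n => a i) = w}) ≤
      ENNReal.ofReal ((b : ℝ) ^ n)⁻¹ := by
  refine Metric.ediam_image_le_iff.2 fun x hx y hy => ?_
  rw [edist_dist, Real.dist_eq]
  refine ENNReal.ofReal_le_ofReal (Real.abs_ofDigits_sub_ofDigits_le fun k hk => ?_)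
  exact congrFun (Eq.trans hx (Eq.symm hy)) ⟨k, hk⟩

theorem dimH_image_ofDigits_eventually_prefix_mem_le {b : ℕ} (hb : 1 < b)
    {W : ∀ n, Finset (Fin n → Fin b)} {d : ℝ≥0}
    (hW : ∃ᶠ n in atTop, (#(W n) : ℝ) ≤ ((b : ℝ) ^ (d : ℝ)) ^ n) :
    dimH (Real.ofDigits '' {a | ∀ᶠ n in atTop, (fun i : Fin n => a i) ∈ W n}) ≤ d := by
  have hb' : (1 : ℝ) < b := by exact_mod_cast hb
  have hradius : Tendsto (fun n => ENNReal.ofReal ((b : ℝ) ^ n)⁻¹) atTop (𝓝 0) := by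
    rw [← ENNReal.ofReal_zero]
    exact ENNReal.tendsto_ofReal (tendsto_pow_atTop_atTop_of_one_lt hb').inv_tendsto_atTop
  have hcard : ∃ᶠ n in atTop,
      Fintype.card (W n) * ENNReal.ofReal ((b : ℝ) ^ n)⁻¹ ^ (d : ℝ) ≤ 1 := by
    refine hW.mono fun n hn => ?_
    rw [Fintype.card_coe, ENNReal.ofReal_rpow_of_pos (by positivity), ← ENNReal.ofReal_natCast,
      ← ENNReal.ofReal_mul (Nat.cast_nonneg _), ENNReal.ofReal_le_one,
      Real.inv_rpow (by positivity), ← Real.rpow_pow_comm (by positivity)]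
    exact mul_inv_le_one_of_le₀ hn (by positivity)
  have hunion : Real.ofDigits '' {a | ∀ᶠ n in atTop, (fun i : Fin n => a i) ∈ W n} =
      ⋃ N, Real.ofDigits '' {a | ∀ n ≥ N, (fun i : Fin n => a i) ∈ W n} := by
    simp only [eventually_atTop, Set.ofPred_exists, Set.image_iUnion]
  rw [hunion, dimH_iUnion]
  refine iSup_le fun N => dimH_le_of_frequently_card_mul_rpow_le hradius
    (Eventually.of_forall fun n (w : W n) => ediam_image_ofDigits_prefix_le w.1) ?_
    ENNReal.one_ne_top hcard
  filter_upwards [eventually_ge_atTop N] with n hn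
  rintro _ ⟨a, ha, rfl⟩
  exact Set.mem_iUnion.2 ⟨⟨_, ha n hn⟩, a, rfl, rfl⟩

theorem dimH_image_ofDigits_zeroMeanDigits {b : ℕ} (hb : 1 < b) :
    dimH (Real.ofDigits '' zeroMeanDigits b) = 0 := by
  refine le_antisymm (ENNReal.le_of_forall_pos_le_add fun d hd _ => ?_) bot_le
  have hc : 1 < (b : ℝ) ^ (d : ℝ) := Real.one_lt_rpow (by exact_mod_cast hb) hd
  obtain ⟨ε, hε, hcard⟩ := exists_pos_forall_card_lightWords_le_pow b hc
  calc dimH (Real.ofDigits '' zeroMeanDigits b)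
      ≤ dimH (Real.ofDigits ''
          {a | ∀ᶠ n in atTop, (fun i : Fin n => a i) ∈ lightWords b ε n}) :=
        dimH_mono <| Set.image_mono fun a ha => eventually_prefix_mem_lightWords ha hε
    _ ≤ d := dimH_image_ofDigits_eventually_prefix_mem_le hb (Frequently.of_forall hcard)
    _ = 0 + d := (zero_add _).symm

theorem Mset_two_dense_and_dimH_eq_zero_general {b i : ℕ} (hb : 1 < b) (hi : 2 ≤ i) :
    Set.Icc (0 : ℝ) 1 ⊆ closure (Real.ofDigits '' meanEqFreqDigits b i) ∧
      dimH (Real.ofDigits '' meanEqFreqDigits b i) = 0 := by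
  rw [meanEqFreqDigits_eq_zeroMeanDigits b hi]
  exact ⟨Icc_subset_closure_image_ofDigits hb (dense_zeroMeanDigits b),
    dimH_image_ofDigits_zeroMeanDigits hb⟩

/-- The set `M₂` is dense in the interval `[0,1]` and is anomalously fractal: its
Hausdorff–Besicovitch dimension equals `0`. -/
theorem Mset_two_dense_and_dimH_eq_zero :
    Set.Icc (0 : ℝ) 1 ⊆ closure (Mset 2) ∧ dimH (Mset 2) = 0 := by
  rw [Mset_eq_image_ofDigits]
  exact Mset_two_dense_and_dimH_eq_zero_general (by norm_num) le_rfl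
end
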